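/- For every ε > 0 there exists C > 0 such that, whenever p ≥ C log n / n and n is even, the binomial random graph G_{n,p} asymptotically almost surely is (ε,ε)-Chvátal-resilient with respect to containing a perfect matching; that is, a.a.s. for every subgraph H ∈ H^{ε,ε}_{n,p}(G_{n,p}), the graph G_{n,p} ∖ H contains a perfect matching. -/

import Mathlib

/-!
By Tutte's theorem it suffices to exclude violators, and a single pseudorandomness property of
`G = G_{n,p}` does so: every nonempty `X` sends at least `p|X||Z| - γnp|X|` edges to every disjoint
`Z` with `|V ∖ Z| ≤ K|X|`. By the lower-tail Chernoff bound a pair `(X, Z)` fails with probability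
at most `exp(-γ²np|X|/4)`. As `np ≥ C log n` with `C` large in terms of `γ` and `K`, this beats the
number of pairs.

Let `H` be in the Chvátal family. If `G ∖ H` has no edges between `X` and `Z`, then `H` contains all
edges of `G` between them, so all but few vertices of `X` have `H`-degree nearly `p|Z|`. Suppose
that deleting `U` from `G ∖ H` leaves more than `|U|` odd components.

* If `|U| ≤ εn/5`, splitting the components into two families gives sides `X`, `Z` without edges
  between them, with `|X| ≤ |Z|` and `|U| ≤ 2|X|`. Most of `X` has `H`-degree about `p(n - |X|)`
  and most of `Z` at least about `p|X|`. This violates the Chvátal condition at `i = 1` when `X` is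
  small and at `i ≈ |X|` otherwise. For `U = ∅` two components exist because `n` is even.
* If `|U| ≥ εn/5`, all but `n/A` of the components have at most `A` vertices, so their union `S` has
  at least about `|U|` vertices. Most vertices of `S` have `H`-degree about `p(n - |U|)`, and most
  vertices outside `U` and `S` have `H`-degree at least about `p|S|`, hence about `p|U|` or more.
  This violates the Chvátal condition at `i ≈ |U|`.
-/

open Filter Real

namespace Resilience

variable {V : Type*}

/-- The degree of a vertex, as the cardinality of its neighbourhood. -/
noncomputable def deg (G : SimpleGraph V) (v : V) : ℕ := (G.neighborSet v).ncard

/-- The neighbourhood of a set of vertices: all vertices with a neighbour in `X`. -/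
def nbhd (G : SimpleGraph V) (X : Set V) : Set V := {v | ∃ x ∈ X, G.Adj v x}

/-- The minimum degree over a set of vertices. -/
noncomputable def minDeg (G : SimpleGraph V) (X : Set V) : ℕ :=
  sInf ((fun v => deg G v) '' X)

/-- The number of edges of `G` with one endpoint in `X` and the other in `Y`. -/
noncomputable def eBetween (G : SimpleGraph V) (X Y : Set V) : ℕ :=
  {e ∈ G.edgeSet | ∃ x ∈ X, ∃ y ∈ Y, e = s(x, y)}.ncard

/-- The number of edges of `G` with both endpoints in `A`. -/
noncomputable def eIn (G : SimpleGraph V) (A : Set V) : ℕ :=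
  {e ∈ G.edgeSet | ∀ v ∈ e, v ∈ A}.ncard

/-- The graph on `V` whose edges are the consecutive pairs of the list `l`;
this lets us view a path, recorded as a list of distinct vertices, as a graph. -/
def listGraph (l : List V) : SimpleGraph V :=
  SimpleGraph.fromEdgeSet {e | ∃ q ∈ l.zip l.tail, e = s(q.1, q.2)}

/-- `l` is a (nonempty) path on `V` all of whose edges lie in `G`. -/
def IsPathOn (G : SimpleGraph V) (l : List V) : Prop :=
  l ≠ [] ∧ l.Nodup ∧ l.Chain' G.Adj

/-- `l` is a longest path with all edges in `G`. -/
def IsLongestPathOn (G : SimpleGraph V) (l : List V) : Prop :=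
  IsPathOn G l ∧ ∀ l' : List V, IsPathOn G l' → l'.length ≤ l.length

/-- `l'` is obtained from the path `l` (with fixed last endpoint) by a single rotation
within `G`, whose broken edge lies on the original path `P`.  Writing
`l = a :: t₁ ++ c :: b :: t₂`, the pivot is `b`, the new edge is `ab ∈ G`, the broken
edge is `cb` (an edge of `P`), and the rotated path is `(a :: t₁ ++ [c]).reverse ++ b :: t₂`. -/
def IsRotation (G : SimpleGraph V) (P l l' : List V) : Prop :=
  ∃ (a c b : V) (t₁ t₂ : List V),
    l = a :: t₁ ++ c :: b :: t₂ ∧ G.Adj a b ∧ (listGraph P).Adj c b ∧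
    l' = (a :: t₁ ++ [c]).reverse ++ b :: t₂

/-- The set of paths obtainable from `P` by at most `t` successive rotations within `G`
with fixed last endpoint, all broken edges lying on `P`. -/
def rotSet (G : SimpleGraph V) (P : List V) : ℕ → Set (List V)
  | 0 => {P}
  | t + 1 => rotSet G P t ∪ {l' | ∃ l ∈ rotSet G P t, IsRotation G P l l'}

/-- `R^t_{G,P,u}`: the set of endpoints of paths obtainable from `P` by at most `t`
successive rotations within `G` with fixed last endpoint. -/
def Rset (G : SimpleGraph V) (P : List V) (t : ℕ) : Set V :=
  {x | ∃ l ∈ rotSet G P t, l.head? = some x}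

/-- The family `H^ε_{n,p}` of Pósa-type subgraphs: there is an ordering of the vertices
with non-increasing degrees such that `d_H(v_i) ≤ (n-i)p - εnp` for all `i < n/2`
(1-based indexing). -/
def PosaFamily (n : ℕ) (p ε : ℝ) (H : SimpleGraph (Fin n)) : Prop :=
  ∃ v : Fin n → Fin n, Function.Bijective v ∧
    (∀ i j : Fin n, i ≤ j → deg H (v j) ≤ deg H (v i)) ∧
    ∀ i : Fin n, ((i.1 : ℝ) + 1) < n / 2 →
      (deg H (v i) : ℝ) ≤ ((n : ℝ) - ((i.1 : ℝ) + 1)) * p - ε * n * p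

/-- The family `H^{ε,δ}_{n,p}` of (shifted) Chvátal-type subgraphs, where the shift
`δn` is recorded as a natural number `s`: there is an ordering of the vertices with
non-increasing degrees such that for all `i < n/2` (1-based indexing), either
`d_H(v_i) ≤ (n-i)p - εnp` or `d_H(v_{n-i-s}) ≤ ip - εnp`. -/
def ChvatalFamily (n : ℕ) (p ε : ℝ) (s : ℕ) (H : SimpleGraph (Fin n)) : Prop :=
  ∃ v : Fin n → Fin n, Function.Bijective v ∧
    (∀ i j : Fin n, i ≤ j → deg H (v j) ≤ deg H (v i)) ∧
    ∀ i : Fin n, ((i.1 : ℝ) + 1) < n / 2 →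
      ((deg H (v i) : ℝ) ≤ ((n : ℝ) - ((i.1 : ℝ) + 1)) * p - ε * n * p ∨
       (deg H (v ⟨n - (i.1 + 1) - s - 1, by have := i.2; omega⟩) : ℝ) ≤
         ((i.1 : ℝ) + 1) * p - ε * n * p)

/-- The probability weight of a fixed graph `G` in the binomial random graph `G_{n,p}`. -/
noncomputable def weight (n : ℕ) (p : ℝ) (G : SimpleGraph (Fin n)) : ℝ :=
  p ^ G.edgeSet.ncard * (1 - p) ^ (n.choose 2 - G.edgeSet.ncard)

open Classical in
/-- The probability that the binomial random graph `G_{n,p}` satisfies the property `Q`. -/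
noncomputable def Pr (n : ℕ) (p : ℝ) (Q : SimpleGraph (Fin n) → Prop) : ℝ :=
  ∑ G : SimpleGraph (Fin n), if Q G then weight n p G else 0

/-- Property `RE(δ)` for a (connected) graph `G` on `n` vertices: for every path `P`
on the vertex set, either `G ∪ P` has a longer path, or there are at least `δn` vertices
`v`, each with a set `T v` of at least `δn` vertices `w`, such that `G ∪ P` has a path
from `v` to `w` with the same vertex set as `P`. -/
def RE (n : ℕ) (δ : ℝ) (G : SimpleGraph (Fin n)) : Prop :=
  G.Connected ∧
  ∀ P : List (Fin n), P ≠ [] → P.Nodup →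
    (∃ Q : List (Fin n), IsPathOn (G ⊔ listGraph P) Q ∧ P.length < Q.length) ∨
    (∃ S : Set (Fin n), δ * n ≤ S.ncard ∧
      ∃ T : Fin n → Set (Fin n), (∀ v ∈ S, δ * n ≤ (T v).ncard) ∧
        ∀ v ∈ S, ∀ w ∈ T v, ∃ Q : List (Fin n),
          IsPathOn (G ⊔ listGraph P) Q ∧ Q.head? = some v ∧ Q.getLast? = some w ∧
          Q.toFinset = P.toFinset)

/-- `G₂` complements `G₁` (with respect to parameter `δ` as in `RE(δ)`): for every path
`P` on the vertex set, either `G₁ ∪ P` has a longer path, or there are sets `S`, `T v`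
as in the definition of `RE(δ)` together with `v ∈ S` and `w ∈ T v` such that `vw` is an
edge of `G₁ ∪ G₂`. -/
def Complements (n : ℕ) (δ : ℝ) (G₁ G₂ : SimpleGraph (Fin n)) : Prop :=
  ∀ P : List (Fin n), P ≠ [] → P.Nodup →
    (∃ Q : List (Fin n), IsPathOn (G₁ ⊔ listGraph P) Q ∧ P.length < Q.length) ∨
    (∃ S : Set (Fin n), δ * n ≤ S.ncard ∧
      ∃ T : Fin n → Set (Fin n), (∀ v ∈ S, δ * n ≤ (T v).ncard) ∧
        (∀ v ∈ S, ∀ w ∈ T v, ∃ Q : List (Fin n),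
          IsPathOn (G₁ ⊔ listGraph P) Q ∧ Q.head? = some v ∧ Q.getLast? = some w ∧
          Q.toFinset = P.toFinset) ∧
        ∃ v ∈ S, ∃ w ∈ T v, (G₁ ⊔ G₂).Adj v w)

open MeasureTheory ProbabilityTheory Finset unitInterval
open scoped SimpleGraph

section BinomialRandomGraph

instance [Countable V] : MeasurableSingletonClass (SimpleGraph V) where
  measurableSet_singleton G := by
    rw [← SimpleGraph.edgeSet_injective.preimage_image {G}, Set.image_singleton]
    exact SimpleGraph.measurable_edgeSet (measurableSet_singleton _)

variable [Fintype V] [DecidableEq V]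

open Classical in
lemma sum_comp_edgeFinset {M : Type*} [AddCommMonoid M] (F : Finset (Sym2 V) → M) :
    ∑ G : SimpleGraph V, F G.edgeFinset =
      ∑ t ∈ (⊤ : SimpleGraph V).edgeFinset.powerset, F t := by
  refine sum_nbij' (fun G => G.edgeFinset) (fun t => SimpleGraph.fromEdgeSet t) ?_ ?_ ?_ ?_ ?_
  · intro G _
    exact mem_powerset.2 (SimpleGraph.edgeFinset_mono le_top)
  · simp
  · simp
  · intro t ht
    rw [← coe_inj, SimpleGraph.coe_edgeFinset, SimpleGraph.edgeSet_fromEdgeSet,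
      sdiff_eq_left, Set.disjoint_left]
    intro e he
    simpa using mem_powerset.1 ht he
  · simp

omit [DecidableEq V] in
lemma measureReal_binomialRandom_singleton (p : I) (G : SimpleGraph V) [Fintype G.edgeSet] :
    G(V, p).real {G} = (p : ℝ) ^ #G.edgeFinset *
      (1 - p : ℝ) ^ ((Fintype.card V).choose 2 - #G.edgeFinset) := by
  have hcard : G.edgeSet.ncard = #G.edgeFinset := by
    rw [← SimpleGraph.coe_edgeFinset, Set.ncard_coe_finset]
  simp [measureReal_def, hcard]

open Classical in
lemma integral_prod_edgeFinset (p : I) (q : Sym2 V → ℝ) :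
    ∫ G, ∏ e ∈ G.edgeFinset, q e ∂G(V, p) =
      ∏ e ∈ (⊤ : SimpleGraph V).edgeFinset, (p * q e + (1 - p)) := by
  simp_rw [integral_fintype .of_finite, measureReal_binomialRandom_singleton, prod_add,
    prod_mul_distrib, prod_const, smul_eq_mul]
  rw [sum_comp_edgeFinset fun t => (p : ℝ) ^ #t * (1 - p : ℝ) ^ (_ - #t) * ∏ e ∈ t, q e]
  refine sum_congr rfl fun t ht => ?_
  rw [card_sdiff_of_subset (mem_powerset.1 ht), SimpleGraph.card_edgeFinset_top_eq_card_choose_two]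
  ring

open Classical in
lemma mgf_card_filter_mem_edgeSet (p : I) {E : Finset (Sym2 V)}
    (hE : E ⊆ (⊤ : SimpleGraph V).edgeFinset) (l : ℝ) :
    mgf (fun G => (#{e ∈ E | e ∈ G.edgeSet} : ℝ)) G(V, p) l = (p * exp l + (1 - p)) ^ #E := by
  have exp_count (G : SimpleGraph V) : exp (l * #{e ∈ E | e ∈ G.edgeSet}) =
      ∏ e ∈ G.edgeFinset, if e ∈ E then exp l else 1 := by
    have hinter : {e ∈ E | e ∈ G.edgeSet} = G.edgeFinset ∩ E := by
      ext e
      simp [and_comm]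
    rw [prod_ite_mem, prod_const, ← Real.exp_nat_mul, mul_comm, hinter]
  simp_rw [mgf, exp_count, integral_prod_edgeFinset]
  rw [← prod_sdiff hE, prod_congr rfl (g := fun _ => (1 : ℝ)), prod_const_one, one_mul,
    prod_congr rfl fun e he => by rw [if_pos he], prod_const]
  intro e he
  simp [(mem_sdiff.1 he).2]

lemma exp_neg_le_one_sub_add_sq {l : ℝ} (hl : 0 ≤ l) : exp (-l) ≤ 1 - l + l ^ 2 := by
  have hexp := add_one_le_exp l
  rw [exp_neg, inv_le_iff_one_le_mul₀ (exp_pos l)]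
  calc 1 ≤ (1 - l + l ^ 2) * (l + 1) := by nlinarith [pow_nonneg hl 3]
    _ ≤ (1 - l + l ^ 2) * exp l := by gcongr; nlinarith [sq_nonneg (l - 1)]

open Classical in
/- Exponential Markov inequality with parameter `-l`, using `e⁻ˡ ≤ 1 - l + l²`. -/
lemma measureReal_card_filter_mem_edgeSet_le (p : I) {E : Finset (Sym2 V)}
    (hE : E ⊆ (⊤ : SimpleGraph V).edgeFinset) {l : ℝ} (hl : 0 ≤ l) (t : ℝ) :
    G(V, p).real {G | (#{e ∈ E | e ∈ G.edgeSet} : ℝ) ≤ p * #E - t} ≤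
      exp (p * #E * l ^ 2 - l * t) := by
  have hp0 : (0 : ℝ) ≤ p := p.2.1
  have hp1 : (p : ℝ) ≤ 1 := p.2.2
  have hbase : p * exp (-l) + (1 - p) ≤ exp (p * (l ^ 2 - l)) :=
    calc p * exp (-l) + (1 - p) ≤ p * (1 - l + l ^ 2) + (1 - p) := by
          gcongr; exact exp_neg_le_one_sub_add_sq hl
      _ = p * (l ^ 2 - l) + 1 := by ring
      _ ≤ exp (p * (l ^ 2 - l)) := add_one_le_exp _
  calc _ ≤ exp (-(-l) * (p * #E - t)) * (p * exp (-l) + (1 - p)) ^ #E := by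
        rw [← mgf_card_filter_mem_edgeSet p hE]
        exact measure_le_le_exp_mul_mgf _ (by linarith) .of_finite
    _ ≤ exp (-(-l) * (p * #E - t)) * exp (p * (l ^ 2 - l)) ^ #E := by
        have : 0 ≤ p * exp (-l) + (1 - p) := by
          have := mul_nonneg hp0 (exp_pos (-l)).le
          linarith
        gcongr
    _ = exp (p * #E * l ^ 2 - l * t) := by
        rw [← Real.exp_nat_mul, ← Real.exp_add]
        ring_nf

end BinomialRandomGraph

lemma injOn_sym2Mk_product {X Z : Finset V} (hXZ : Disjoint X Z) :
    Set.InjOn (fun q : V × V => s(q.1, q.2)) (X ×ˢ Z : Finset (V × V)) := by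
  rintro ⟨a, b⟩ hab ⟨c, d⟩ hcd h
  simp only [coe_product, Set.mem_prod, mem_coe] at hab hcd
  rcases Sym2.eq_iff.1 h with ⟨rfl, rfl⟩ | ⟨rfl, -⟩
  · rfl
  · exact absurd hcd.2 (disjoint_left.1 hXZ hab.1)

open Classical in
/-- The one-sided pseudorandomness used on the random graph of density `p`: every nonempty `X`
sends at least the expected number of edges, up to an error `γnp|X|`, to every disjoint `Z` that
misses at most `K|X|` of the `n` vertices. -/
def Expands [Fintype V] (G : SimpleGraph V) (p γ K : ℝ) : Prop :=
  ∀ X Z : Finset V, X.Nonempty → Disjoint X Z → (Fintype.card V : ℝ) ≤ #Z + K * #X →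
    p * #X * (#Z - γ * Fintype.card V) ≤ #(G.interedges X Z)

section Expansion

variable [Fintype V] [DecidableEq V]

omit [DecidableEq V] in
open Classical in
lemma measureReal_card_interedges_lt_le (p : I) {γ : ℝ} (hγ : 0 ≤ γ) {X Z : Finset V}
    (hXZ : Disjoint X Z) :
    G(V, p).real {G | (#(G.interedges X Z) : ℝ) < p * #X * (#Z - γ * Fintype.card V)} ≤
      exp (-(γ ^ 2 / 4 * (Fintype.card V * p) * #X)) := by
  have hp0 : (0 : ℝ) ≤ p := p.2.1
  set E : Finset (Sym2 V) := (X ×ˢ Z).image fun q => s(q.1, q.2)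
  have hE : E ⊆ (⊤ : SimpleGraph V).edgeFinset := by
    simp only [E, image_subset_iff, mem_product, SimpleGraph.mem_edgeFinset,
      SimpleGraph.mem_edgeSet, SimpleGraph.top_adj]
    exact fun q hq h => disjoint_left.1 hXZ hq.1 (h ▸ hq.2)
  have hcard : #E = #X * #Z := by
    rw [card_image_of_injOn (injOn_sym2Mk_product hXZ), card_product]
  have hcount (G : SimpleGraph V) : #{e ∈ E | e ∈ G.edgeSet} = #(G.interedges X Z) := by
    rw [filter_image, card_image_of_injOn]
    · rfl
    · exact (injOn_sym2Mk_product hXZ).mono (mod_cast filter_subset _ _)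
  have hZ : (#Z : ℝ) ≤ Fintype.card V := mod_cast card_le_univ Z
  calc _ ≤ G(V, p).real {G | (#{e ∈ E | e ∈ G.edgeSet} : ℝ) ≤
          p * #E - γ * Fintype.card V * p * #X} := by
        refine measureReal_mono fun G hG => ?_
        simp only [Set.mem_ofPred_eq, hcount, hcard, Nat.cast_mul] at hG ⊢
        linarith
    _ ≤ exp (p * #E * (γ / 2) ^ 2 - γ / 2 * (γ * Fintype.card V * p * #X)) :=
        measureReal_card_filter_mem_edgeSet_le p hE (by positivity) _
    _ ≤ exp (-(γ ^ 2 / 4 * (Fintype.card V * p) * #X)) := by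
        rw [exp_le_exp, hcard, Nat.cast_mul]
        nlinarith [mul_le_mul_of_nonneg_left hZ (by positivity : 0 ≤ (p : ℝ) * #X * (γ ^ 2 / 4))]

omit [DecidableEq V] in
lemma sum_pow_card_eq_one_add_pow (a : ℝ) :
    ∑ X : Finset V, a ^ #X = (1 + a) ^ Fintype.card V := by
  simpa [add_comm] using Fintype.sum_pow_mul_eq_add_pow V a 1

lemma sum_nonempty_pow_card_mul_pow_card (a : ℝ) :
    ∑ q ∈ univ.erase (∅ : Finset V) ×ˢ (univ : Finset (Finset V)), a ^ #q.1 * a ^ #q.2 =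
      ((1 + a) ^ Fintype.card V - 1) * (1 + a) ^ Fintype.card V := by
  rw [sum_product, ← sum_mul_sum (univ.erase ∅) univ (a ^ #·) (a ^ #·), sum_pow_card_eq_one_add_pow,
    sum_erase_eq_sub (mem_univ _), sum_pow_card_eq_one_add_pow, card_empty, pow_zero]

lemma one_add_inv_sq_pow_le_exp (n : ℕ) : (1 + ((n : ℝ) ^ 2)⁻¹) ^ n ≤ exp (n : ℝ)⁻¹ := by
  rcases eq_or_ne n 0 with rfl | hn
  · simp
  calc (1 + ((n : ℝ) ^ 2)⁻¹) ^ n ≤ exp ((n : ℝ) ^ 2)⁻¹ ^ n := by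
        gcongr; linarith [add_one_le_exp ((n : ℝ) ^ 2)⁻¹]
    _ = exp (n : ℝ)⁻¹ := by
        rw [← Real.exp_nat_mul]
        congr 1
        field_simp

open Classical in
lemma measureReal_card_interedges_lt_le_pow [Nonempty V] (p : I) {γ K : ℝ} (hγ : 0 ≤ γ)
    (hp : (2 + 2 * K) * log (Fintype.card V) ≤ γ ^ 2 / 4 * (Fintype.card V * p)) {X Z : Finset V}
    (hXZ : Disjoint X Z) (hK : (Fintype.card V : ℝ) ≤ #Z + K * #X) :
    G(V, p).real {G | (#(G.interedges X Z) : ℝ) < p * #X * (#Z - γ * Fintype.card V)} ≤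
      ((Fintype.card V : ℝ) ^ 2)⁻¹ ^ #X * ((Fintype.card V : ℝ) ^ 2)⁻¹ ^ #Zᶜ := by
  set n := Fintype.card V
  have hZc : (#Z : ℝ) + #Zᶜ = n := mod_cast card_add_card_compl Z
  have hinv : ((n : ℝ) ^ 2)⁻¹ = exp (-(2 * log n)) := by
    rw [exp_neg, two_mul, exp_add, exp_log (mod_cast Fintype.card_pos), ← sq]
  refine (measureReal_card_interedges_lt_le p hγ hXZ).trans ?_
  rw [hinv, ← Real.exp_nat_mul, ← Real.exp_nat_mul, ← Real.exp_add, exp_le_exp]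
  have hlogX := mul_le_mul_of_nonneg_right hp (Nat.cast_nonneg (α := ℝ) #X)
  have hlogZ := mul_le_mul_of_nonneg_left (by linarith : (#Zᶜ : ℝ) ≤ K * #X) (log_natCast_nonneg n)
  linarith

omit [DecidableEq V] in
lemma measureReal_not_expands_le [Nonempty V] (p : I) {γ K : ℝ} (hγ : 0 ≤ γ)
    (hp : (2 + 2 * K) * log (Fintype.card V) ≤ γ ^ 2 / 4 * (Fintype.card V * p)) :
    G(V, p).real {G | ¬ Expands G p γ K} ≤
      (exp (Fintype.card V : ℝ)⁻¹ - 1) * exp (Fintype.card V : ℝ)⁻¹ := by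
  classical
  set n := Fintype.card V
  set a : ℝ := ((n : ℝ) ^ 2)⁻¹
  -- The pairs are indexed by `(X, V ∖ Z)`, so that the sum of the bounds factorises.
  set bad : Finset V × Finset V → Set (SimpleGraph V) := fun q =>
    {G | (#(G.interedges q.1 q.2ᶜ) : ℝ) < p * #q.1 * (#q.2ᶜ - γ * n)}
  set J : Finset (Finset V × Finset V) :=
    {q ∈ univ.erase ∅ ×ˢ univ | Disjoint q.1 q.2ᶜ ∧ (n : ℝ) ≤ #q.2ᶜ + K * #q.1}
  have hcover : {G | ¬ Expands G p γ K} ⊆ ⋃ q ∈ J, bad q := by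
    intro G hG
    simp only [Expands, Set.mem_ofPred_eq] at hG
    push Not at hG
    obtain ⟨X, Z, hX, hXZ, hK, hlt⟩ := hG
    simp only [Set.mem_iUnion]
    refine ⟨(X, Zᶜ), ?_, by simpa [bad] using hlt⟩
    simp only [J, mem_filter, mem_product, mem_erase, mem_univ, and_true, compl_compl]
    exact ⟨hX.ne_empty, hXZ, hK⟩
  calc G(V, p).real {G | ¬ Expands G p γ K} ≤ G(V, p).real (⋃ q ∈ J, bad q) :=
        measureReal_mono hcover (measure_ne_top _ _)
    _ ≤ ∑ q ∈ J, G(V, p).real (bad q) := measureReal_biUnion_finset_le _ _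
    _ ≤ ∑ q ∈ J, a ^ #q.1 * a ^ #q.2 := sum_le_sum fun q hq => by
        obtain ⟨-, hdisj, hK⟩ := mem_filter.1 hq
        simpa only [compl_compl] using measureReal_card_interedges_lt_le_pow p hγ hp hdisj hK
    _ ≤ ∑ q ∈ univ.erase (∅ : Finset V) ×ˢ univ, a ^ #q.1 * a ^ #q.2 :=
        sum_le_sum_of_subset_of_nonneg (filter_subset _ _) fun _ _ _ => by positivity
    _ = ((1 + a) ^ n - 1) * (1 + a) ^ n := sum_nonempty_pow_card_mul_pow_card a
    _ ≤ (exp (n : ℝ)⁻¹ - 1) * exp (n : ℝ)⁻¹ := by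
        have := one_add_inv_sq_pow_le_exp n
        gcongr
        linarith [add_one_le_exp (n : ℝ)⁻¹, inv_nonneg.2 (Nat.cast_nonneg (α := ℝ) n)]

end Expansion

lemma tendsto_exp_inv_sub_one_mul_exp_inv :
    Tendsto (fun n : ℕ => (exp (n : ℝ)⁻¹ - 1) * exp (n : ℝ)⁻¹) atTop (nhds 0) := by
  have hexp : Tendsto (fun n : ℕ => exp (n : ℝ)⁻¹) atTop (nhds 1) :=
    Real.exp_zero ▸ (continuous_exp.tendsto 0).comp tendsto_inv_atTop_nhds_zero_nat
  simpa using (hexp.sub_const 1).mul hexp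

theorem exists_eventually_le_measureReal_expands {γ K : ℝ} (hγ : 0 < γ) (hK : 0 ≤ K) :
    ∃ C : ℝ, 0 < C ∧ ∀ η : ℝ, 0 < η → ∀ᶠ n : ℕ in atTop, ∀ p : I, C * log n / n ≤ p →
      1 - η ≤ G(Fin n, p).real {G | Expands G p γ K} := by
  refine ⟨(2 + 2 * K) * (4 / γ ^ 2), by positivity, fun η hη => ?_⟩
  filter_upwards [tendsto_exp_inv_sub_one_mul_exp_inv.eventually_le_const hη, eventually_ge_atTop 1]
    with n hn hn1 p hp
  have : NeZero n := ⟨by omega⟩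
  have hn0 : (0 : ℝ) < n := mod_cast hn1
  have hlog : (2 + 2 * K) * log n ≤ γ ^ 2 / 4 * (n * p) := by
    rw [div_le_iff₀ hn0] at hp
    calc (2 + 2 * K) * log n = γ ^ 2 / 4 * ((2 + 2 * K) * (4 / γ ^ 2) * log n) := by field_simp
      _ ≤ γ ^ 2 / 4 * (n * p) := by rw [mul_comm (n : ℝ)]; gcongr
  have hfail := measureReal_not_expands_le (V := Fin n) p hγ.le (by simpa using hlog)
  rw [Fintype.card_fin] at hfail
  have := probReal_add_probReal_compl (μ := G(Fin n, p))
    (Set.toFinite {G | Expands G p γ K}).measurableSet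
  rw [Set.compl_ofPred] at this
  linarith

section Pr

variable {n : ℕ} {p : ℝ}

lemma weight_nonneg (h0 : 0 ≤ p) (h1 : p ≤ 1) (G : SimpleGraph (Fin n)) : 0 ≤ weight n p G :=
  mul_nonneg (pow_nonneg h0 _) (pow_nonneg (sub_nonneg.2 h1) _)

lemma Pr_mono (h0 : 0 ≤ p) (h1 : p ≤ 1) {Q R : SimpleGraph (Fin n) → Prop}
    (h : ∀ G, Q G → R G) : Pr n p Q ≤ Pr n p R := by
  classical
  simp only [Pr, ← sum_filter]
  exact sum_le_sum_of_subset_of_nonneg (monotone_filter_right _ fun G _ => h G)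
    fun G _ _ => weight_nonneg h0 h1 G

lemma Pr_eq_measureReal_binomialRandom (p : I) (Q : SimpleGraph (Fin n) → Prop) :
    Pr n p Q = G(Fin n, p).real {G | Q G} := by
  classical
  have hweight (G : SimpleGraph (Fin n)) : weight n p G = G(Fin n, p).real {G} := by
    simp [weight, measureReal_def]
  simp only [Pr, ← sum_filter, hweight, sum_measureReal_singleton, coe_filter_univ]

end Pr

section Degrees

variable [Fintype V]

open Classical in
lemma deg_eq_card_filter (H : SimpleGraph V) (x : V) : deg H x = #{z | H.Adj x z} := by
  rw [deg, ← Set.ncard_coe_finset, coe_filter_univ]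
  rfl

omit [Fintype V] in
open Classical in
lemma card_interedges_le_sum_deg [Finite V] {G H : SimpleGraph V} {X Z : Finset V}
    (hGH : ∀ x ∈ X, ∀ z ∈ Z, G.Adj x z → H.Adj x z) :
    #(G.interedges X Z) ≤ ∑ x ∈ X, deg H x := by
  have := Fintype.ofFinite V
  simp only [SimpleGraph.interedges_def, card_filter, sum_product]
  simp only [← card_filter, deg_eq_card_filter]
  refine sum_le_sum fun x hx => card_le_card fun z hz => ?_
  simp only [mem_filter, mem_univ, true_and] at hz ⊢
  exact hGH x hx z hz.1 hz.2

open Classical in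
/-- The vertices of `X` of degree less than `t` in `H`. -/
noncomputable def lowDeg (H : SimpleGraph V) (X : Finset V) (t : ℝ) : Finset V :=
  {x ∈ X | (deg H x : ℝ) < t}

omit [Fintype V] in
lemma lowDeg_subset (H : SimpleGraph V) (X : Finset V) (t : ℝ) : lowDeg H X t ⊆ X := by
  classical exact filter_subset _ _

omit [Fintype V] in
lemma mem_lowDeg {H : SimpleGraph V} {X : Finset V} {t : ℝ} {x : V} :
    x ∈ lowDeg H X t ↔ x ∈ X ∧ (deg H x : ℝ) < t := by
  classical exact mem_filter

omit [Fintype V] in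
lemma le_deg_of_mem_sdiff_lowDeg [DecidableEq V] {H : SimpleGraph V} {X : Finset V} {t : ℝ} {x : V}
    (hx : x ∈ X \ lowDeg H X t) : t ≤ deg H x := by
  rw [Finset.mem_sdiff, mem_lowDeg] at hx
  exact not_lt.1 fun h => hx.2 ⟨hx.1, h⟩

omit [Fintype V] in
lemma lowDeg_mono (H : SimpleGraph V) (X : Finset V) {t t' : ℝ} (h : t ≤ t') :
    lowDeg H X t ⊆ lowDeg H X t' := fun _ hx =>
  mem_lowDeg.2 ⟨(mem_lowDeg.1 hx).1, (mem_lowDeg.1 hx).2.trans_le h⟩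

section Expands

variable {G H : SimpleGraph V} {p γ K : ℝ} {X Z : Finset V}

lemma Expands.exists_deg_ge (hG : Expands G p γ K) (hX : X.Nonempty) (hXZ : Disjoint X Z)
    (hK : (Fintype.card V : ℝ) ≤ #Z + K * #X) (hGH : ∀ x ∈ X, ∀ z ∈ Z, G.Adj x z → H.Adj x z) :
    ∃ x ∈ X, p * (#Z - γ * Fintype.card V) ≤ deg H x := by
  classical
  refine exists_le_of_sum_le hX ?_
  calc ∑ _x ∈ X, p * (#Z - γ * Fintype.card V) = p * #X * (#Z - γ * Fintype.card V) := by
        rw [sum_const, nsmul_eq_mul]; ring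
    _ ≤ #(G.interedges X Z) := hG X Z hX hXZ hK
    _ ≤ ∑ x ∈ X, (deg H x : ℝ) := mod_cast card_interedges_le_sum_deg hGH

lemma Expands.card_lowDeg_le (hG : Expands G p γ K) (hK : 0 < K) (hXZ : Disjoint X Z)
    (hGH : ∀ x ∈ X, ∀ z ∈ Z, G.Adj x z → H.Adj x z) :
    #(lowDeg H X (p * (#Z - γ * Fintype.card V))) ≤ Fintype.card V / K := by
  by_contra! hlarge
  have hsub := lowDeg_subset H X (p * (#Z - γ * Fintype.card V))
  obtain ⟨x, hx, hdeg⟩ := hG.exists_deg_ge (H := H) (Z := Z)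
    (card_pos.1 (by exact_mod_cast (by positivity : (0 : ℝ) ≤ Fintype.card V / K).trans_lt hlarge))
    (disjoint_of_subset_left hsub hXZ)
    (by rw [div_lt_iff₀ hK] at hlarge; linarith [Nat.cast_nonneg (α := ℝ) #Z])
    (fun x hx => hGH x (hsub hx))
  exact (mem_lowDeg.1 hx).2.not_ge hdeg

end Expands

end Degrees

lemma exists_mem_apply_le_of_lt_card {n : ℕ} {v : Fin n → V} (hv : Function.Surjective v)
    {d : V → ℕ} (hd : Antitone (d ∘ v)) {S : Finset V} {j : Fin n} (hj : j < #S) :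
    ∃ w ∈ S, d w ≤ d (v j) := by
  classical
  by_contra! hlt
  have hsub : S ⊆ (Iio j).image v := by
    intro w hw
    obtain ⟨i, rfl⟩ := hv w
    exact mem_image_of_mem v (mem_Iio.2 (hd.reflect_lt (hlt _ hw)))
  have := (card_le_card hsub).trans card_image_le
  rw [Fin.card_Iio] at this
  omega

namespace ChvatalFamily

variable {n s : ℕ} {p ε : ℝ} {H : SimpleGraph (Fin n)}

lemma exists_deg_le (hH : ChvatalFamily n p ε s H) {i : ℕ} (hi : 1 ≤ i) (hin : 2 * i < n)
    {P Q : Finset (Fin n)} (hP : i ≤ #P) (hQ : n ≤ #Q + i + s) (hQne : Q.Nonempty) :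
    (∃ v ∈ P, (deg H v : ℝ) ≤ p * (n - i - ε * n)) ∨
      ∃ v ∈ Q, (deg H v : ℝ) ≤ p * (i - ε * n) := by
  obtain ⟨v, hv, hmono, hdeg⟩ := hH
  have hi1 : ((i - 1 : ℕ) : ℝ) + 1 = i := mod_cast Nat.sub_add_cancel hi
  have hin' : (2 * i : ℝ) < n := mod_cast hin
  have hQpos := hQne.card_pos
  have hcond := hdeg ⟨i - 1, by omega⟩ (by simp only [hi1]; linarith)
  simp only [hi1] at hcond
  refine hcond.imp (fun hle => ?_) (fun hle => ?_)
  · obtain ⟨w, hw, hwle⟩ := exists_mem_apply_le_of_lt_card hv.2 (d := deg H)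
      (fun a b hab => hmono a b hab) (S := P) (j := ⟨i - 1, by omega⟩) (by simp only; omega)
    exact ⟨w, hw, (Nat.cast_le.2 hwle).trans (by linarith)⟩
  · obtain ⟨w, hw, hwle⟩ := exists_mem_apply_le_of_lt_card hv.2 (d := deg H)
      (fun a b hab => hmono a b hab) (S := Q) (j := ⟨n - (i - 1 + 1) - s - 1, by omega⟩)
      (by simp only; omega)
    exact ⟨w, hw, (Nat.cast_le.2 hwle).trans (by linarith)⟩

lemma deg_le (hH : ChvatalFamily n p ε s H) (hp : 0 < p) (hε : 1 < ε * n) (hn : 2 < n)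
    (w : Fin n) : (deg H w : ℝ) ≤ p * (n - 1 - ε * n) := by
  obtain ⟨v, hv, hmono, hdeg⟩ := hH
  obtain ⟨j, rfl⟩ := hv.2 w
  have hn' : (2 : ℝ) < n := mod_cast hn
  rcases hdeg ⟨0, by omega⟩ (by simp only [CharP.cast_eq_zero]; linarith) with hle | hle
  · have := Nat.cast_le (α := ℝ).2 (hmono ⟨0, by omega⟩ j (Nat.zero_le _))
    norm_num at hle
    linarith
  · have hneg : p * (1 - ε * n) < 0 := mul_neg_of_pos_of_neg hp (by linarith)
    have hnonneg := (Nat.cast_nonneg (α := ℝ) _).trans hle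
    norm_num at hnonneg
    linarith

/- The Chvátal condition at `i = ⌊u - εn/10⌋` fails if almost all vertices of `S` and of `T` have
high degree; the slack `εn/10` leaves room for the exceptional vertices. -/
lemma lt_card_lowDeg (hH : ChvatalFamily n p ε s H) (hp : 0 < p) (hεn : 20 ≤ ε * n)
    (hs : ε * n ≤ s) {S T : Finset (Fin n)} (hST : Disjoint S T) {u : ℝ} (hu : ε * n / 5 ≤ u)
    (hun : 2 * u ≤ n) (hS : u - ε * n / 20 ≤ #S) (hcover : n - u - ε * n / 2 ≤ #S + #T) :
    ε * n / 20 < #(lowDeg H S (p * (n - u - 3 / 5 * (ε * n)))) ∨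
      ε * n / 20 < #(lowDeg H T (p * (u - 3 / 20 * (ε * n)))) := by
  by_contra! hfew
  set L := lowDeg H S (p * (n - u - 3 / 5 * (ε * n)))
  set M := lowDeg H T (p * (u - 3 / 20 * (ε * n)))
  have hL : (#(S \ L) : ℝ) = #S - #L := cast_card_sdiff (lowDeg_subset _ _ _)
  have hM : (#(T \ M) : ℝ) = #T - #M := cast_card_sdiff (lowDeg_subset _ _ _)
  have hunion : (#(S \ L ∪ T \ M) : ℝ) = #(S \ L) + #(T \ M) := mod_cast
    card_union_of_disjoint (disjoint_of_subset_left sdiff_subset (hST.mono_right sdiff_subset))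
  set i := ⌊u - ε * n / 10⌋₊
  have hi_le : (i : ℝ) ≤ u - ε * n / 10 := Nat.floor_le (by linarith)
  have hi_gt : u - ε * n / 10 < i + 1 := Nat.lt_floor_add_one _
  have hi : 1 ≤ i := Nat.le_floor (by push_cast; linarith)
  have hP : i ≤ #(S \ L) := by
    have : (i : ℝ) ≤ #(S \ L) := by linarith
    exact_mod_cast this
  have hQ : n ≤ #(S \ L ∪ T \ M) + i + s := by
    have : (n : ℝ) ≤ #(S \ L ∪ T \ M) + i + s := by linarith
    exact_mod_cast this
  have hin : 2 * i < n := by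
    have : (2 * i : ℝ) < n := by linarith
    exact_mod_cast this
  rcases hH.exists_deg_le hi hin hP hQ ((card_pos.1 (hi.trans hP)).mono subset_union_left) with
    ⟨v, hv, hle⟩ | ⟨v, hv, hle⟩
  · linarith [le_of_mul_le_mul_left ((le_deg_of_mem_sdiff_lowDeg hv).trans hle) hp]
  · rcases mem_union.1 hv with hv | hv
    · linarith [le_of_mul_le_mul_left ((le_deg_of_mem_sdiff_lowDeg hv).trans hle) hp]
    · linarith [le_of_mul_le_mul_left ((le_deg_of_mem_sdiff_lowDeg hv).trans hle) hp]

end ChvatalFamily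

section Labellings

variable {α : Type*} [DecidableEq V] [DecidableEq α] {f : V → α} {W : Finset V}

lemma exists_split_by_label (W : Finset V) (f : V → α) :
    ∃ X Z : Finset V, Disjoint X Z ∧ X ∪ Z = W ∧ #X ≤ #Z ∧ #(W.image f) / 2 ≤ #X ∧
      ∀ x ∈ X, ∀ z ∈ Z, f x ≠ f z := by
  obtain ⟨B, hB, hcard⟩ := exists_subset_card_eq (Nat.div_le_self #(W.image f) 2)
  have hX : #(W.image f) / 2 ≤ #{v ∈ W | f v ∈ B} := by
    refine hcard ▸ (card_le_card fun b hb => ?_).trans (card_image_le (f := f))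
    obtain ⟨v, hv, rfl⟩ := mem_image.1 (hB hb)
    exact mem_image_of_mem f (mem_filter.2 ⟨hv, hb⟩)
  have hZ : #(W.image f) / 2 ≤ #{v ∈ W | f v ∉ B} := by
    have hsub : W.image f \ B ⊆ {v ∈ W | f v ∉ B}.image f := fun b hb => by
      rw [Finset.mem_sdiff, mem_image] at hb
      obtain ⟨⟨v, hv, rfl⟩, hvB⟩ := hb
      exact mem_image_of_mem f (mem_filter.2 ⟨hv, hvB⟩)
    have := (card_le_card hsub).trans card_image_le
    rw [card_sdiff_of_subset hB] at this
    omega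
  have hne : ∀ x ∈ {v ∈ W | f v ∈ B}, ∀ z ∈ {v ∈ W | f v ∉ B}, f x ≠ f z :=
    fun x hx z hz h => (mem_filter.1 hz).2 (h ▸ (mem_filter.1 hx).2)
  rcases le_total #{v ∈ W | f v ∈ B} #{v ∈ W | f v ∉ B} with hle | hle
  · exact ⟨_, _, disjoint_filter_filter_not W W _, filter_union_filter_not_eq _ W, hle, hX, hne⟩
  · exact ⟨_, _, (disjoint_filter_filter_not W W _).symm,
      (union_comm _ _).trans (filter_union_filter_not_eq _ W), hle, hZ,
      fun x hx z hz => (hne z hz x hx).symm⟩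

omit [DecidableEq V] in
lemma card_image_eq_sum_inv_card_fiber (W : Finset V) (f : V → α) :
    (#(W.image f) : ℝ) = ∑ v ∈ W, (#{w ∈ W | f w = f v} : ℝ)⁻¹ := by
  rw [← sum_fiberwise_of_maps_to (g := f) (t := W.image f) fun v => mem_image_of_mem f,
    cast_card]
  refine sum_congr rfl fun b hb => ?_
  obtain ⟨v, hv, rfl⟩ := mem_image.1 hb
  have hpos : #{w ∈ W | f w = f v} ≠ 0 := card_ne_zero_of_mem (mem_filter.2 ⟨hv, rfl⟩)
  rw [sum_congr rfl fun w hw => by rw [(mem_filter.1 hw).2], sum_const, nsmul_eq_mul,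
    mul_inv_cancel₀ (mod_cast hpos)]

omit [DecidableEq V] in
lemma card_image_le_card_small_fiber_add_div (W : Finset V) (f : V → α) {A : ℝ} (hA : 0 < A) :
    (#(W.image f) : ℝ) ≤ #{v ∈ W | (#{w ∈ W | f w = f v} : ℝ) ≤ A} + #W / A := by
  rw [card_image_eq_sum_inv_card_fiber,
    ← sum_filter_add_sum_filter_not W fun v => (#{w ∈ W | f w = f v} : ℝ) ≤ A]
  gcongr
  · rw [cast_card]
    refine sum_le_sum fun v hv => inv_le_one_of_one_le₀ ?_
    have hpos : 0 < #{w ∈ W | f w = f v} :=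
      card_pos.2 ⟨v, mem_filter.2 ⟨(mem_filter.1 hv).1, rfl⟩⟩
    exact_mod_cast hpos
  · calc ∑ v ∈ W with ¬(#{w ∈ W | f w = f v} : ℝ) ≤ A, (#{w ∈ W | f w = f v} : ℝ)⁻¹
        ≤ ∑ v ∈ W with ¬(#{w ∈ W | f w = f v} : ℝ) ≤ A, A⁻¹ := by
          refine sum_le_sum fun v hv => inv_anti₀ hA ?_
          exact (not_le.1 (mem_filter.1 hv).2).le
      _ = #{v ∈ W | ¬(#{w ∈ W | f w = f v} : ℝ) ≤ A} / A := by
          rw [sum_const, nsmul_eq_mul, div_eq_mul_inv]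
      _ ≤ #W / A := by gcongr; exact filter_subset _ _

end Labellings

/-- `f` labels the vertices outside `U` in such a way that the vertices of each component of
`G - U` share a label. Different components may share a label too. -/
def IsConstOnComponents {α : Type*} (G : SimpleGraph V) (U : Finset V) (f : V → α) : Prop :=
  ∀ x ∉ U, ∀ y ∉ U, G.Adj x y → f x = f y

section Separation

variable {α : Type*} {G H : SimpleGraph V} {U : Finset V} {f : V → α} {p : ℝ}

lemma IsConstOnComponents.adj_of_ne (hf : IsConstOnComponents (G \ H) U f) {x z : V} (hx : x ∉ U)
    (hz : z ∉ U) (hne : f x ≠ f z) (hG : G.Adj x z) : H.Adj x z := by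
  by_contra hH
  exact hne (hf x hx z hz ((G.sdiff_adj H x z).2 ⟨hG, hH⟩))

section FintypeVertices

variable [Fintype V] [DecidableEq V] [DecidableEq α] {γ K A : ℝ}

/- There are no edges of `G \ H` from `X` to the vertices outside `U` whose label does not occur
in `X`. -/
lemma Expands.exists_deg_ge_of_card_fiber_le (hG : Expands G p γ K) (hp : 0 ≤ p)
    (hf : IsConstOnComponents (G \ H) U f) {X : Finset V} (hX : X.Nonempty) (hXU : Disjoint X U)
    (hK : Fintype.card V ≤ K * #X) (hA : ∀ x ∈ X, (#{w ∈ Uᶜ | f w = f x} : ℝ) ≤ A) :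
    ∃ x ∈ X, p * (Fintype.card V - #U - #X * A - γ * Fintype.card V) ≤ deg H x := by
  set T : Finset V := X.biUnion fun x => {w ∈ Uᶜ | f w = f x}
  have hout : ∀ z ∈ (U ∪ T)ᶜ, z ∉ U ∧ ∀ x ∈ X, f x ≠ f z := by
    intro z hz
    simp only [T, mem_compl, mem_union, mem_biUnion, mem_filter, not_or, not_exists, not_and] at hz
    exact ⟨hz.1, fun x hx h => hz.2 x hx hz.1 h.symm⟩
  have hT : (#T : ℝ) ≤ #X * A := by
    calc (#T : ℝ) ≤ ∑ x ∈ X, (#{w ∈ Uᶜ | f w = f x} : ℝ) := mod_cast card_biUnion_le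
      _ ≤ #X * A := by simpa using sum_le_card_nsmul X _ A hA
  have hUT : (#(U ∪ T) : ℝ) ≤ #U + #T := mod_cast card_union_le U T
  have hcompl : (#(U ∪ T) : ℝ) + #(U ∪ T)ᶜ = Fintype.card V := mod_cast card_add_card_compl _
  obtain ⟨x, hx, hdeg⟩ := hG.exists_deg_ge (H := H) (Z := (U ∪ T)ᶜ) hX
    (disjoint_left.2 fun x hx hx' => (hout x hx').2 x hx rfl)
    (by linarith [Nat.cast_nonneg (α := ℝ) #(U ∪ T)ᶜ])
    fun x hx z hz => hf.adj_of_ne (disjoint_left.1 hXU hx) (hout z hz).1 ((hout z hz).2 x hx)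
  refine ⟨x, hx, le_trans (mul_le_mul_of_nonneg_left ?_ hp) hdeg⟩
  linarith

/-- The vertices outside `U` whose label is shared by at most `A` vertices outside `U`. -/
noncomputable def smallClasses (U : Finset V) (f : V → α) (A : ℝ) : Finset V :=
  {v ∈ Uᶜ | (#{w ∈ Uᶜ | f w = f v} : ℝ) ≤ A}

lemma smallClasses_subset (U : Finset V) (f : V → α) (A : ℝ) : smallClasses U f A ⊆ Uᶜ :=
  filter_subset _ _

lemma card_image_compl_le_card_smallClasses_add_div (U : Finset V) (f : V → α) (hA : 0 < A) :
    #(Uᶜ.image f) ≤ #(smallClasses U f A) + Fintype.card V / A :=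
  (card_image_le_card_small_fiber_add_div Uᶜ f hA).trans <| by
    rw [smallClasses]
    gcongr
    exact card_le_univ _

lemma IsConstOnComponents.adj_of_mem_smallClasses (hf : IsConstOnComponents (G \ H) U f) {x z : V}
    (hz : z ∈ Uᶜ \ smallClasses U f A) (hx : x ∈ smallClasses U f A) (hG : G.Adj z x) :
    H.Adj z x := by
  rw [Finset.mem_sdiff] at hz
  rw [smallClasses, mem_filter] at hx
  refine hf.adj_of_ne (mem_compl.1 hz.1) (mem_compl.1 hx.1) (fun h => hz.2 ?_) hG
  exact mem_filter.2 ⟨hz.1, h ▸ hx.2⟩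

lemma Expands.card_lowDeg_smallClasses_le (hG : Expands G p γ K) (hp : 0 ≤ p) (hK : 0 < K)
    (hA : 0 ≤ A) (hf : IsConstOnComponents (G \ H) U f) :
    #(lowDeg H (smallClasses U f A) (p * (Fintype.card V - #U - (Fintype.card V / K + 1) * A
      - γ * Fintype.card V))) ≤ Fintype.card V / K := by
  set n := Fintype.card V
  by_contra! hlarge
  obtain ⟨X, hXlow, hX⟩ := exists_subset_card_eq (Nat.ceil_le.2 hlarge.le)
  have hXS := hXlow.trans (lowDeg_subset _ _ _)
  have hXge : n / K ≤ #X := hX ▸ Nat.le_ceil _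
  have hXle : (#X : ℝ) ≤ n / K + 1 := hX ▸ (Nat.ceil_lt_add_one (by positivity)).le
  obtain ⟨v, -⟩ := card_pos.1 <| Nat.cast_pos.1 <|
    (by positivity : (0 : ℝ) ≤ n / K).trans_lt hlarge
  have hn : (0 : ℝ) < n := mod_cast Fintype.card_pos_iff.2 ⟨v⟩
  obtain ⟨x, hx, hdeg⟩ := hG.exists_deg_ge_of_card_fiber_le hp hf
    (card_pos.1 (Nat.cast_pos.1 ((by positivity : (0 : ℝ) < n / K).trans_le hXge)))
    (disjoint_left.2 fun x hx => mem_compl.1 (smallClasses_subset U f A (hXS hx)))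
    (by rwa [div_le_iff₀' hK] at hXge) fun x hx => (mem_filter.1 (hXS hx)).2
  refine (mem_lowDeg.1 (hXlow hx)).2.not_ge (hdeg.trans' (mul_le_mul_of_nonneg_left ?_ hp))
  gcongr

end FintypeVertices

section Chvatal

variable {n s : ℕ} {G H : SimpleGraph (Fin n)} {U : Finset (Fin n)} {f : Fin n → α} {ε : ℝ}

lemma Expands.exists_adj_sdiff {K : ℝ} (hG : Expands G p (ε / 10) K)
    (hH : ChvatalFamily n p ε s H) (hp : 0 < p) (hn : 2 < n) (hεn : 20 ≤ ε * n) (hs : ε * n ≤ s)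
    (hK : 3 ≤ K) (hεK : 20 ≤ ε * K) {X Z : Finset (Fin n)} (hX : X.Nonempty) (hXZ : Disjoint X Z)
    (hle : #X ≤ #Z) (h3 : n ≤ 3 * #X + #Z) (hcover : n - ε * n / 2 ≤ #X + #Z) :
    ∃ x ∈ X, ∃ z ∈ Z, (G \ H).Adj x z := by
  by_contra! hnone
  have hGH : ∀ x ∈ X, ∀ z ∈ Z, G.Adj x z → H.Adj x z := fun x hx z hz h => by
    by_contra h'
    exact hnone x hx z hz ((G.sdiff_adj H x z).2 ⟨h, h'⟩)
  have hcard : #X + #Z ≤ n := by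
    simpa [card_union_of_disjoint hXZ] using card_le_univ (X ∪ Z)
  have hle' : (#X : ℝ) ≤ #Z := mod_cast hle
  have hcard' : (#X + #Z : ℝ) ≤ n := mod_cast hcard
  have h3' : (n : ℝ) ≤ 3 * #X + #Z := mod_cast h3
  rcases le_total (#X : ℝ) (ε * n / 5) with hsmall | hlarge
  · have hK3 := mul_le_mul_of_nonneg_right hK (Nat.cast_nonneg (α := ℝ) #X)
    obtain ⟨x, -, hdeg⟩ := hG.exists_deg_ge hX hXZ (by rw [Fintype.card_fin]; linarith) hGH
    rw [Fintype.card_fin] at hdeg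
    have hub := hH.deg_le hp (by linarith) hn x
    linarith [le_of_mul_le_mul_left (hdeg.trans hub) hp]
  · have hnK : (n : ℝ) / K ≤ ε * n / 20 := by
      rw [div_le_iff₀ (by linarith)]
      nlinarith [Nat.cast_nonneg (α := ℝ) n]
    have hfewX := hG.card_lowDeg_le (by linarith) hXZ hGH
    have hfewZ := hG.card_lowDeg_le (by linarith) hXZ.symm
      fun z hz x hx h => (hGH x hx z hz h.symm).symm
    rw [Fintype.card_fin] at hfewX hfewZ
    have hmonoX := card_le_card <| lowDeg_mono H X <| mul_le_mul_of_nonneg_left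
      (by linarith : n - #X - 3 / 5 * (ε * n) ≤ #Z - ε / 10 * n) hp.le
    have hmonoZ := card_le_card <| lowDeg_mono H Z <| mul_le_mul_of_nonneg_left
      (by linarith : #X - 3 / 20 * (ε * n) ≤ #X - ε / 10 * n) hp.le
    rw [← Nat.cast_le (α := ℝ)] at hmonoX hmonoZ
    rcases hH.lt_card_lowDeg hp hεn hs hXZ hlarge (by linarith) (by linarith) (by linarith)
      with hlt | hlt <;> linarith

variable [DecidableEq α] {A : ℝ}

/- There are about `#U` vertices in small classes, and their `H`-degrees are about `p (n - #U)`;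
those of the other vertices outside `U` are at least about `p #U`. -/
lemma Expands.card_image_le_card_of_large (hG : Expands G p (ε / 10) (A ^ 2))
    (hH : ChvatalFamily n p ε s H) (hp : 0 < p) (hs : ε * n ≤ s) (hA : 1 ≤ A) (hεA : 20 ≤ ε * A)
    (hAn : A ^ 2 ≤ n) (hf : IsConstOnComponents (G \ H) U f) (hU : ε * n / 5 ≤ #U) :
    #(Uᶜ.image f) ≤ #U := by
  by_contra! hlt
  set S := smallClasses U f A
  have hcompl : (#U + #Uᶜ : ℝ) = n := by
    exact_mod_cast (card_add_card_compl U).trans (Fintype.card_fin n)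
  have hnA : n / A ≤ ε * n / 20 := by
    rw [div_le_iff₀ (by linarith)]
    nlinarith [Nat.cast_nonneg (α := ℝ) n]
  have hA_le : A ≤ n / A := by rwa [le_div_iff₀ (by linarith), ← sq]
  have hnA2 : n / A ^ 2 * A = n / A := by field_simp
  have hnA2_le : n / A ^ 2 ≤ ε * n / 20 := by
    nlinarith [(by positivity : (0 : ℝ) ≤ n / A ^ 2)]
  have hS : #U - ε * n / 20 ≤ #S := by
    have hlabels := card_image_compl_le_card_smallClasses_add_div U f (by linarith : 0 < A)
    have hlt' : (#U : ℝ) < #(Uᶜ.image f) := mod_cast hlt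
    rw [Fintype.card_fin] at hlabels
    linarith
  have hεn : 20 ≤ ε * n := by nlinarith
  have hcover : n - #U - ε * n / 2 ≤ #S + #(Uᶜ \ S) := by
    rw [cast_card_sdiff (smallClasses_subset U f A)]
    linarith
  have hU2 : (2 * #U : ℝ) ≤ n := by
    have : (#U : ℝ) ≤ #Uᶜ := mod_cast hlt.le.trans card_image_le
    linarith
  have hfewS := hG.card_lowDeg_smallClasses_le (A := A) hp.le (by positivity) (by linarith) hf
  have hfewT := hG.card_lowDeg_le (by positivity) (sdiff_disjoint (s := S) (t := Uᶜ))
    fun z hz x hx => hf.adj_of_mem_smallClasses hz hx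
  rw [Fintype.card_fin] at hfewS hfewT
  have hmonoS := card_le_card <| lowDeg_mono H S <| mul_le_mul_of_nonneg_left
    (by linarith : n - #U - 3 / 5 * (ε * n) ≤ n - #U - (n / A ^ 2 + 1) * A - ε / 10 * n) hp.le
  have hmonoT := card_le_card <| lowDeg_mono H (Uᶜ \ S) <| mul_le_mul_of_nonneg_left
    (by linarith : #U - 3 / 20 * (ε * n) ≤ #S - ε / 10 * n) hp.le
  rw [← Nat.cast_le (α := ℝ)] at hmonoS hmonoT
  rcases hH.lt_card_lowDeg hp hεn hs disjoint_sdiff hU hU2 hS hcover with hlow | hlow <;> linarith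

lemma Expands.card_image_le_card (hG : Expands G p (ε / 10) (A ^ 2))
    (hH : ChvatalFamily n p ε s H) (hp : 0 < p) (hs : ε * n ≤ s) (hA : 4 ≤ A) (hεA : 20 ≤ ε * A)
    (hAn : A ^ 2 ≤ n) (hf : IsConstOnComponents (G \ H) U f) (hlabels : 1 < #(Uᶜ.image f)) :
    #(Uᶜ.image f) ≤ #U := by
  rcases le_total (ε * n / 5) #U with hU | hU
  · exact hG.card_image_le_card_of_large hH hp hs (by linarith) hεA hAn hf hU
  by_contra! hlt
  obtain ⟨X, Z, hXZ, hunion, hle, hX, hne⟩ := exists_split_by_label Uᶜ f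
  have hcard : #U + (#X + #Z) = n := by
    rw [← card_union_of_disjoint hXZ, hunion, card_add_card_compl, Fintype.card_fin]
  have hcard' : (#U + (#X + #Z) : ℝ) = n := mod_cast hcard
  have hn : 2 < n := by
    have : (2 : ℝ) < n := by nlinarith
    exact_mod_cast this
  have hεn : 20 ≤ ε * n := by nlinarith
  obtain ⟨x, hx, z, hz, hadj⟩ := hG.exists_adj_sdiff hH hp hn hεn hs (by nlinarith)
    (by nlinarith) (card_pos.1 (by omega)) hXZ hle (by omega) (by linarith)
  have hmem : ∀ v ∈ X ∪ Z, v ∉ U := fun v hv => mem_compl.1 (hunion ▸ hv)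
  exact hne x hx z hz
    (hf x (hmem x (mem_union_left _ hx)) z (hmem z (mem_union_right _ hz)) hadj)

end Chvatal

end Separation

section Tutte

variable [Fintype V] {G : SimpleGraph V} {u : Set V}

lemma one_lt_ncard_oddComponents_of_isTutteViolator (hV : Even (Fintype.card V))
    (hu : G.IsTutteViolator u) :
    1 < ((⊤ : G.Subgraph).deleteVerts u).coe.oddComponents.ncard := by
  have hlt : u.ncard < ((⊤ : G.Subgraph).deleteVerts u).coe.oddComponents.ncard := hu
  by_contra! hle
  obtain rfl : u = ∅ := (Set.ncard_eq_zero (Set.toFinite _)).1 (by omega)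
  have hodd : Odd ((⊤ : G.Subgraph).deleteVerts ∅).coe.oddComponents.ncard :=
    hle.antisymm (hlt.trans_le' (Nat.zero_le _)) ▸ odd_one
  rw [SimpleGraph.odd_ncard_oddComponents, ← Nat.not_even_iff_odd] at hodd
  exact hodd (by simpa using hV)

lemma exists_isConstOnComponents_card_image_ge [DecidableEq V] (G : SimpleGraph V)
    (U : Finset V) : ∃ f : V → V, IsConstOnComponents G U f ∧
      ((⊤ : G.Subgraph).deleteVerts (U : Set V)).coe.oddComponents.ncard ≤ #(Uᶜ.image f) := by
  set R := ((⊤ : G.Subgraph).deleteVerts (U : Set V)).coe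
  have hR : ∀ v, v ∉ U ↔ v ∈ ((⊤ : G.Subgraph).deleteVerts (U : Set V)).verts := by simp
  set f : V → V := fun v =>
    if h : v ∉ U then (R.connectedComponentMk ⟨v, (hR v).1 h⟩).out.1 else v with hf
  refine ⟨f, fun x hx y hy h => ?_, ?_⟩
  · simp only [hf, dif_pos hx, dif_pos hy]
    rw [SimpleGraph.ConnectedComponent.sound (SimpleGraph.Adj.reachable _)]
    simpa [R] using ⟨hx, hy, h⟩
  · rw [← Set.ncard_coe_finset]
    refine Set.ncard_le_ncard_of_injOn (fun c => c.out.1) (fun c _ => ?_)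
      (Subtype.val_injective.comp (Function.RightInverse.injective Quot.out_eq)).injOn
      (Set.toFinite _)
    induction c using SimpleGraph.ConnectedComponent.ind with
    | h v =>
      have hv := (hR v).2 v.2
      exact mem_image.2 ⟨v.1, mem_compl.2 hv, by simp only [hf, dif_pos hv]⟩

end Tutte

lemma Expands.exists_isPerfectMatching {n s : ℕ} {p ε A : ℝ} {G H : SimpleGraph (Fin n)}
    (hG : Expands G p (ε / 10) (A ^ 2)) (hH : ChvatalFamily n p ε s H) (hn : Even n) (hp : 0 < p)
    (hs : ε * n ≤ s) (hA : 4 ≤ A) (hεA : 20 ≤ ε * A) (hAn : A ^ 2 ≤ n) :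
    ∃ M : (G \ H).Subgraph, M.IsPerfectMatching := by
  classical
  refine SimpleGraph.tutte.2 fun u hu => ?_
  obtain ⟨f, hf, hcard⟩ := exists_isConstOnComponents_card_image_ge (G \ H) u.toFinset
  rw [Set.coe_toFinset] at hcard
  have hlt : #u.toFinset < #(u.toFinsetᶜ.image f) := by
    rw [← Set.ncard_eq_toFinset_card']
    exact hu.trans_le hcard
  have hlabels := (one_lt_ncard_oddComponents_of_isTutteViolator
    (by rwa [Fintype.card_fin]) hu).trans_le hcard
  exact (hG.card_image_le_card hH hp hs hA hεA hAn hf hlabels).not_gt hlt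

theorem chvatal_resilience_matching_general (ε : ℝ) (hε : 0 < ε) :
    ∃ C : ℝ, 0 < C ∧ ∀ η : ℝ, 0 < η → ∃ N : ℕ, ∀ n : ℕ, N ≤ n → Even n →
      ∀ p : ℝ, C * Real.log n / n ≤ p → p ≤ 1 →
        1 - η ≤ Pr n p (fun G =>
          ∀ s : ℕ, ε * n ≤ s → ∀ H : SimpleGraph (Fin n), ChvatalFamily n p ε s H →
            ∃ M : (G \ H).Subgraph, M.IsPerfectMatching) := by
  set A : ℝ := 20 / ε + 4
  have hA : 4 ≤ A := le_add_of_nonneg_left (by positivity)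
  have hεA : 20 ≤ ε * A := by
    rw [mul_add, mul_div_cancel₀ _ hε.ne']
    linarith
  obtain ⟨C, hC, hexp⟩ := exists_eventually_le_measureReal_expands (γ := ε / 10) (K := A ^ 2)
    (by positivity) (by positivity)
  refine ⟨C, hC, fun η hη => ?_⟩
  obtain ⟨N, hN⟩ := eventually_atTop.1 <| (hexp η hη).and <|
    tendsto_natCast_atTop_atTop.eventually_ge_atTop (A ^ 2)
  refine ⟨N, fun n hn heven p hp hp1 => ?_⟩
  obtain ⟨hexp, hAn⟩ := hN n hn
  have hp0 : 0 < p := by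
    have hn1 : (1 : ℝ) < n := by nlinarith
    have hlog : 0 < Real.log n := Real.log_pos hn1
    exact hp.trans_lt' (by positivity)
  calc 1 - η ≤ Pr n p (fun G => Expands G p (ε / 10) (A ^ 2)) :=
        (hexp ⟨p, hp0.le, hp1⟩ hp).trans_eq (Pr_eq_measureReal_binomialRandom _ _).symm
    _ ≤ _ := Pr_mono hp0.le hp1 fun G hG s hs H hH =>
        hG.exists_isPerfectMatching hH heven hp0 hs hA hεA hAn

/-- Theorem 1.5.  For every `ε > 0` there exists `C > 0` such that,
whenever `p ≥ C log n / n` and `n` is even, a.a.s. for every subgraph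
`H ∈ H^{ε,ε}_{n,p}(G_{n,p})` the graph `G_{n,p} ∖ H` has a perfect matching. -/
theorem chvatal_resilience_matching (ε : ℝ) (hε : 0 < ε) :
    ∃ C : ℝ, 0 < C ∧ ∀ η : ℝ, 0 < η → ∃ N : ℕ, ∀ n : ℕ, N ≤ n → Even n →
      ∀ p : ℝ, C * Real.log n / n ≤ p → p ≤ 1 →
        1 - η ≤ Pr n p (fun G =>
          ∀ H : SimpleGraph (Fin n), H ≤ G → ChvatalFamily n p ε ⌈ε * n⌉₊ H →
            ∃ M : (G \ H).Subgraph, M.IsPerfectMatching) := by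
  obtain ⟨C, hC, hPr⟩ := chvatal_resilience_matching_general ε hε
  refine ⟨C, hC, fun η hη => (hPr η hη).imp fun N hN n hn heven p hp hp1 =>
    (hN n hn heven p hp hp1).trans (Pr_mono (hp.trans' (by positivity)) hp1 fun G hG H _ hH =>
      hG _ (Nat.le_ceil _) H hH)⟩

end Resilience
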